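/- Let Ω ⊂ ℝ² be a bounded measurable set, G(x,y) = (1/(2π)) log ‖x − y‖, and let f be a bounded measurable function on Ω. Then the volume potential V f(x) = ∫_Ω G(x,y) f(y) dy is continuously differentiable on ℝ², and its gradient is given by differentiation under the integral sign: ∇ V f(x) = ∫_Ω (x − y)/(2π ‖x − y‖²) f(y) dy for every x ∈ ℝ². -/

import Mathlib

open MeasureTheory Real

namespace VolPot

open Filter Topology Set

abbrev E2 := EuclideanSpace ℝ (Fin 2)

/-- Regularised gradient kernel. -/
noncomputable def kerA (f : E2 → ℝ) (t : ℝ) (x y : E2) : E2 :=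
  f y • ((1 / (2 * π * (‖x - y‖ ^ 2 + t))) • (x - y))

/-- Regularised logarithmic kernel. -/
noncomputable def kerL (f : E2 → ℝ) (t : ℝ) (x y : E2) : ℝ :=
  (1 / (4 * π)) * Real.log (‖x - y‖ ^ 2 + t) * f y

/-- The error kernel. -/
noncomputable def errH (t : ℝ) (z : E2) : ℝ := ‖z‖⁻¹ * (t / (‖z‖ ^ 2 + t))

lemma integrable_inv_ball :
    Integrable (fun z : E2 => (Metric.ball (0 : E2) 1).indicator (fun z => ‖z‖⁻¹) z) := by
  have h := (integrable_fun_norm_addHaar (E := E2) (F := ℝ) volume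
    (f := (Iio (1 : ℝ)).indicator (fun r => r⁻¹))).2 ?_
  · refine h.congr (Eventually.of_forall fun z => ?_)
    simp [indicator]
  · have h1 : IntegrableOn ((Iio (1 : ℝ)).indicator (fun _ => (1 : ℝ))) (Ioi 0) := by
      rw [integrableOn_indicator_iff measurableSet_Iio]
      simp [Iio_inter_Ioi]
    refine h1.congr_fun (fun r hr => ?_) measurableSet_Ioi
    have hr' : r ≠ 0 := ne_of_gt hr
    by_cases h : r < 1 <;> simp [indicator, h, hr']

lemma inv_le (z : E2) :
    ‖z‖⁻¹ ≤ (Metric.ball (0 : E2) 1).indicator (fun z => ‖z‖⁻¹) z + 1 := by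
  by_cases h : ‖z‖ < 1
  · simp [indicator, h]
  · simp only [indicator, Metric.mem_ball, dist_zero_right, h, if_false, zero_add]
    exact inv_le_one_of_one_le₀ (not_lt.1 h)

lemma integrableOn_inv {Ω : Set E2} (hv : volume Ω < ⊤) (x : E2) :
    IntegrableOn (fun y => ‖x - y‖⁻¹) Ω := by
  have : IsFiniteMeasure (volume.restrict Ω) := ⟨by simpa using hv⟩
  have h1 := (integrable_inv_ball.comp_sub_left x).integrableOn (s := Ω)
  refine Integrable.mono' (h1.add (integrable_const (1 : ℝ))) ?_ ?_
  · exact (by fun_prop : Measurable fun y : E2 => ‖x - y‖⁻¹).aestronglyMeasurable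
  · refine Eventually.of_forall fun y => ?_
    rw [norm_inv, norm_norm]
    exact inv_le (x - y)

lemma errH_nonneg {t : ℝ} (ht : 0 ≤ t) (z : E2) : 0 ≤ errH t z := by
  unfold errH; positivity

lemma errH_le_inv {t : ℝ} (ht : 0 ≤ t) (z : E2) : errH t z ≤ ‖z‖⁻¹ := by
  unfold errH
  refine mul_le_of_le_one_right (by positivity) ?_
  exact div_le_one_of_le₀ (by nlinarith [sq_nonneg ‖z‖]) (by positivity)

lemma errH_measurable (t : ℝ) : Measurable (errH t) := by
  unfold errH; fun_prop

lemma errH_le {t : ℝ} (ht : 0 ≤ t) (z : E2) :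
    errH t z ≤ (Metric.ball (0 : E2) 1).indicator (errH t) z + t := by
  by_cases h : ‖z‖ < 1
  · simp [indicator, h, ht]
  · simp only [indicator, Metric.mem_ball, dist_zero_right, h, if_false, zero_add]
    unfold errH
    have h1 : 1 ≤ ‖z‖ := not_lt.1 h
    have h2 : ‖z‖⁻¹ ≤ 1 := inv_le_one_of_one_le₀ h1
    have h3 : t / (‖z‖ ^ 2 + t) ≤ t := div_le_self ht (by nlinarith)
    calc _ ≤ 1 * t := by gcongr
      _ = t := one_mul t

lemma errH_ball_integrable {t : ℝ} (ht : 0 ≤ t) :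
    Integrable ((Metric.ball (0 : E2) 1).indicator (errH t)) := by
  refine Integrable.mono' integrable_inv_ball
    ((errH_measurable t).indicator measurableSet_ball).aestronglyMeasurable ?_
  refine Eventually.of_forall fun z => ?_
  rw [Real.norm_of_nonneg (indicator_nonneg (fun z _ => errH_nonneg ht z) z)]
  exact indicator_le_indicator (errH_le_inv ht z)

lemma errH_tendsto {t : ℕ → ℝ} (ht : ∀ n, 0 < t n) (htl : Tendsto t atTop (𝓝 0)) :
    Tendsto (fun n => ∫ z, (Metric.ball (0 : E2) 1).indicator (errH (t n)) z) atTop (𝓝 0) := by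
  have := tendsto_integral_of_dominated_convergence
    (F := fun n z => (Metric.ball (0 : E2) 1).indicator (errH (t n)) z) (f := fun _ => (0 : ℝ))
    (μ := volume) _
    (fun n => (errH_ball_integrable (ht n).le).aestronglyMeasurable) integrable_inv_ball
    (fun n => Eventually.of_forall fun z => ?_) (Eventually.of_forall fun z => ?_)
  · simpa using this
  · rw [Real.norm_of_nonneg (indicator_nonneg (fun z _ => errH_nonneg (ht n).le z) z)]
    exact indicator_le_indicator (errH_le_inv (ht n).le z)
  · by_cases h : ‖z‖ < 1
    · simp only [indicator, Metric.mem_ball, dist_zero_right, h, if_true]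
      by_cases hz : z = 0
      · simp [errH, hz]
      · have hz' : ‖z‖ ^ 2 + 0 ≠ 0 := by simpa using hz
        have := (htl.div (htl.const_add (‖z‖ ^ 2)) hz').const_mul (‖z‖⁻¹)
        simpa [errH] using this
    · simp [indicator, h]

variable {Ω : Set E2} {f : E2 → ℝ} {M : ℝ}

lemma kerA_measurable (hf : Measurable f) (t : ℝ) (x : E2) : Measurable (kerA f t x) := by
  unfold kerA; fun_prop

lemma kerL_measurable (hf : Measurable f) (t : ℝ) (x : E2) : Measurable (kerL f t x) := by
  unfold kerL; fun_prop

lemma inv_two_pi_le : 1 / (2 * π) ≤ 1 := by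
  rw [div_le_one (by positivity)]; linarith [Real.pi_gt_three]

lemma norm_kerA {t : ℝ} (ht : 0 ≤ t) (x y : E2) :
    ‖kerA f t x y‖ = |f y| * (1 / (2 * π) * (‖x - y‖ / (‖x - y‖ ^ 2 + t))) := by
  unfold kerA
  rw [norm_smul, norm_smul, Real.norm_eq_abs, Real.norm_of_nonneg (by positivity)]
  congr 1
  rw [← div_div]; ring

lemma norm_kerA_le {t : ℝ} (ht : 0 < t) {y : E2} (hy : |f y| ≤ M) (x : E2) :
    ‖kerA f t x y‖ ≤ M * (1 + 1 / t) := by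
  rw [norm_kerA ht.le]
  have hM : 0 ≤ M := (abs_nonneg _).trans hy
  have h2 : ‖x - y‖ / (‖x - y‖ ^ 2 + t) ≤ 1 + 1 / t := by
    rw [div_le_iff₀ (by positivity)]
    have : (1 + 1 / t) * (‖x - y‖ ^ 2 + t) = ‖x - y‖ ^ 2 + t + ‖x - y‖ ^ 2 / t + 1 := by
      field_simp; ring
    rw [this]
    have : 0 ≤ ‖x - y‖ ^ 2 / t := by positivity
    nlinarith [sq_nonneg (‖x - y‖ - 1)]
  have := inv_two_pi_le
  calc _ ≤ M * (1 * (1 + 1 / t)) := by gcongr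
    _ = _ := by rw [one_mul]

lemma norm_kerA_zero_le {y : E2} (hy : |f y| ≤ M) (x : E2) :
    ‖kerA f 0 x y‖ ≤ M * ‖x - y‖⁻¹ := by
  rw [norm_kerA le_rfl]
  have hM : 0 ≤ M := (abs_nonneg _).trans hy
  have h2 : ‖x - y‖ / (‖x - y‖ ^ 2 + 0) = ‖x - y‖⁻¹ := by
    by_cases h : ‖x - y‖ = 0
    · simp [h]
    · field_simp; simp
  rw [h2]
  have := inv_two_pi_le
  calc _ ≤ M * (1 * ‖x - y‖⁻¹) := by gcongr
    _ = _ := by rw [one_mul]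

lemma norm_kerA_sub {t : ℝ} (ht : 0 < t) {y : E2} (hy : |f y| ≤ M) (x : E2) :
    ‖kerA f 0 x y - kerA f t x y‖ ≤ M * errH t (x - y) := by
  have hM : 0 ≤ M := (abs_nonneg _).trans hy
  by_cases h : ‖x - y‖ = 0
  · have h' : x - y = 0 := norm_eq_zero.1 h
    simp [kerA, h', errH]
  · have hp : 0 < ‖x - y‖ := lt_of_le_of_ne (norm_nonneg _) (Ne.symm h)
    have : kerA f 0 x y - kerA f t x y =
        f y • ((1 / (2 * π) * (‖x - y‖⁻¹ ^ 2 * (t / (‖x - y‖ ^ 2 + t)))) • (x - y)) := by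
      unfold kerA
      rw [← smul_sub, ← sub_smul]
      congr 2
      field_simp
      ring
    rw [this, norm_smul, norm_smul, Real.norm_eq_abs, Real.norm_of_nonneg (by positivity)]
    have h3 : 1 / (2 * π) * (‖x - y‖⁻¹ ^ 2 * (t / (‖x - y‖ ^ 2 + t))) * ‖x - y‖
        = 1 / (2 * π) * errH t (x - y) := by
      unfold errH; field_simp
    rw [h3]
    have := inv_two_pi_le
    have := errH_nonneg ht.le (x - y)
    calc _ ≤ M * (1 * errH t (x - y)) := by gcongr
      _ = _ := by rw [one_mul]

lemma kerL_hasFDerivAt {t : ℝ} (ht : 0 < t) (x y : E2) :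
    HasFDerivAt (fun x => kerL f t x y) (innerSL ℝ (kerA f t x y)) x := by
  have h1 : HasFDerivAt (fun x : E2 => x - y) (ContinuousLinearMap.id ℝ E2) x :=
    (hasFDerivAt_id x).sub_const y
  have hp : ‖x - y‖ ^ 2 + t ≠ 0 := by positivity
  have h2 := (((h1.norm_sq.add_const t).log hp).const_mul (1 / (4 * π))).mul_const (f y)
  unfold kerL
  refine h2.congr_fderiv ?_
  ext v
  simp [kerA]
  field_simp
  left
  ring

lemma kerA_int (hf : Measurable f) (hmeas : MeasurableSet Ω) (hv : volume Ω < ⊤)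
    (hfM : ∀ y ∈ Ω, |f y| ≤ M) {t : ℝ} (ht : 0 ≤ t) (x : E2) :
    IntegrableOn (kerA f t x) Ω := by
  have : IsFiniteMeasure (volume.restrict Ω) := ⟨by simpa using hv⟩
  rcases ht.eq_or_lt with rfl | ht
  · refine Integrable.mono' ((integrableOn_inv hv x).const_mul M)
      (kerA_measurable hf _ x).aestronglyMeasurable ?_
    filter_upwards [ae_restrict_mem hmeas] with y hy
    exact norm_kerA_zero_le (hfM y hy) x
  · refine Integrable.mono' (integrable_const (M * (1 + 1 / t)))
      (kerA_measurable hf _ x).aestronglyMeasurable ?_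
    filter_upwards [ae_restrict_mem hmeas] with y hy
    exact norm_kerA_le ht (hfM y hy) x

/-- Dominating bound for the logarithmic kernels, `0 ≤ t ≤ 1`. -/
lemma norm_kerL_le {t R : ℝ} (ht : 0 ≤ t) (ht1 : t ≤ 1) {x y : E2} (hxy : x ≠ y)
    (hR : ‖x - y‖ ≤ R) (hy : |f y| ≤ M) :
    ‖kerL f t x y‖ ≤ (2 * ‖x - y‖⁻¹ + (R ^ 2 + 1)) * M := by
  have hp : 0 < ‖x - y‖ := norm_pos_iff.2 (sub_ne_zero.2 hxy)
  have hM : 0 ≤ M := (abs_nonneg _).trans hy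
  unfold kerL
  rw [norm_mul, norm_mul, Real.norm_of_nonneg (by positivity : 0 ≤ 1 / (4 * π)),
    Real.norm_eq_abs, Real.norm_eq_abs]
  have h4 : 1 / (4 * π) ≤ 1 := by
    rw [div_le_one (by positivity)]; linarith [Real.pi_gt_three]
  have hl : |Real.log (‖x - y‖ ^ 2 + t)| ≤ 2 * ‖x - y‖⁻¹ + (R ^ 2 + 1) := by
    have hinv : 0 < ‖x - y‖⁻¹ := by positivity
    rw [abs_le]
    constructor
    · have h1 : Real.log (‖x - y‖ ^ 2) ≤ Real.log (‖x - y‖ ^ 2 + t) :=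
        Real.log_le_log (by positivity) (by linarith)
      have h2 : Real.log (‖x - y‖⁻¹) ≤ ‖x - y‖⁻¹ := (Real.log_le_self hinv.le)
      rw [Real.log_inv] at h2
      rw [Real.log_pow] at h1
      push_cast at h1
      nlinarith [sq_nonneg R]
    · have h1 := Real.log_le_self (x := ‖x - y‖ ^ 2 + t) (by positivity)
      have : ‖x - y‖ ^ 2 ≤ R ^ 2 := by gcongr
      linarith
  calc _ ≤ 1 * (2 * ‖x - y‖⁻¹ + (R ^ 2 + 1)) * M := by gcongr
    _ = _ := by rw [one_mul]

lemma exists_R (hbdd : Bornology.IsBounded Ω) (x : E2) : ∃ R, ∀ y ∈ Ω, ‖x - y‖ ≤ R := by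
  obtain ⟨R, hR⟩ := hbdd.subset_closedBall x
  refine ⟨R, fun y hy => ?_⟩
  have := hR hy
  rwa [Metric.mem_closedBall, dist_comm, dist_eq_norm] at this

lemma bound_int (hv : volume Ω < ⊤) (x : E2) (R : ℝ) :
    IntegrableOn (fun y => (2 * ‖x - y‖⁻¹ + (R ^ 2 + 1)) * M) Ω := by
  have : IsFiniteMeasure (volume.restrict Ω) := ⟨by simpa using hv⟩
  exact ((((integrableOn_inv hv x).const_mul 2).add (integrable_const (R ^ 2 + 1))).mul_const M)

lemma ae_ne' (x : E2) : ∀ᵐ y ∂(volume.restrict Ω), x ≠ y := by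
  refine ae_restrict_of_ae ?_
  rw [ae_iff]
  simp

lemma kerL_int (hf : Measurable f) (hmeas : MeasurableSet Ω) (hbdd : Bornology.IsBounded Ω)
    (hfM : ∀ y ∈ Ω, |f y| ≤ M) {t : ℝ} (ht : 0 ≤ t) (ht1 : t ≤ 1) (x : E2) :
    IntegrableOn (kerL f t x) Ω := by
  obtain ⟨R, hR⟩ := exists_R hbdd x
  refine Integrable.mono' (bound_int (M := M) hbdd.measure_lt_top x R)
    (kerL_measurable hf _ x).aestronglyMeasurable ?_
  filter_upwards [ae_restrict_mem hmeas, ae_ne' x] with y hy hne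
  exact norm_kerL_le ht ht1 hne (hR y hy) (hfM y hy)

lemma kerL_tendsto (hf : Measurable f) (hmeas : MeasurableSet Ω) (hbdd : Bornology.IsBounded Ω)
    (hfM : ∀ y ∈ Ω, |f y| ≤ M) {t : ℕ → ℝ} (ht : ∀ n, 0 < t n) (ht1 : ∀ n, t n ≤ 1)
    (htl : Tendsto t atTop (𝓝 0)) (x : E2) :
    Tendsto (fun n => ∫ y in Ω, kerL f (t n) x y) atTop (𝓝 (∫ y in Ω, kerL f 0 x y)) := by
  obtain ⟨R, hR⟩ := exists_R hbdd x
  refine tendsto_integral_of_dominated_convergence _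
    (fun n => (kerL_measurable hf _ x).aestronglyMeasurable)
    (bound_int (M := M) hbdd.measure_lt_top x R) (fun n => ?_) ?_
  · filter_upwards [ae_restrict_mem hmeas, ae_ne' x] with y hy hne
    exact norm_kerL_le (ht n).le (ht1 n) hne (hR y hy) (hfM y hy)
  · filter_upwards [ae_ne' x] with y hne
    have hp : 0 < ‖x - y‖ := norm_pos_iff.2 (sub_ne_zero.2 hne)
    unfold kerL
    exact (((htl.const_add (‖x - y‖ ^ 2)).log (by positivity)).const_mul _).mul_const _

lemma reg_hasFDerivAt (hf : Measurable f) (hmeas : MeasurableSet Ω)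
    (hbdd : Bornology.IsBounded Ω)
    (hfM : ∀ y ∈ Ω, |f y| ≤ M) {t : ℝ} (ht : 0 < t) (ht1 : t ≤ 1) (x : E2) :
    HasFDerivAt (fun x => ∫ y in Ω, kerL f t x y) (∫ y in Ω, innerSL ℝ (kerA f t x y)) x := by
  have : IsFiniteMeasure (volume.restrict Ω) := ⟨by simpa using hbdd.measure_lt_top⟩
  refine hasFDerivAt_integral_of_dominated_of_fderiv_le (s := univ)
    (bound := fun _ => M * (1 + 1 / t)) univ_mem
    (Eventually.of_forall fun x => (kerL_measurable hf _ x).aestronglyMeasurable)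
    (kerL_int hf hmeas hbdd hfM ht.le ht1 x)
    ((innerSL ℝ).continuous.comp_aestronglyMeasurable
      (kerA_measurable hf _ x).aestronglyMeasurable) ?_ (integrable_const _)
    (Eventually.of_forall fun y x _ => kerL_hasFDerivAt ht x y)
  filter_upwards [ae_restrict_mem hmeas] with y hy x _
  rw [innerSL_apply_norm]
  exact norm_kerA_le ht (hfM y hy) x

lemma reg_continuous (hf : Measurable f) (hmeas : MeasurableSet Ω)
    (hbdd : Bornology.IsBounded Ω)
    (hfM : ∀ y ∈ Ω, |f y| ≤ M) {t : ℝ} (ht : 0 < t) :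
    Continuous (fun x => ∫ y in Ω, innerSL ℝ (kerA f t x y)) := by
  have : IsFiniteMeasure (volume.restrict Ω) := ⟨by simpa using hbdd.measure_lt_top⟩
  refine continuous_of_dominated (bound := fun _ => M * (1 + 1 / t))
    (fun x => (innerSL ℝ).continuous.comp_aestronglyMeasurable
      (kerA_measurable hf _ x).aestronglyMeasurable) (fun x => ?_) (integrable_const _)
    (Eventually.of_forall fun y => ?_)
  · filter_upwards [ae_restrict_mem hmeas] with y hy
    rw [innerSL_apply_norm]
    exact norm_kerA_le ht (hfM y hy) x
  · refine (innerSL ℝ).continuous.comp ?_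
    unfold kerA
    have : ∀ x : E2, 2 * π * (‖x - y‖ ^ 2 + t) ≠ 0 := fun x => by positivity
    fun_prop (disch := assumption)

lemma grad_diff (hf : Measurable f) (hmeas : MeasurableSet Ω)
    (hbdd : Bornology.IsBounded Ω) (hM : 0 ≤ M)
    (hfM : ∀ y ∈ Ω, |f y| ≤ M) {t : ℝ} (ht : 0 < t) (x : E2) :
    ‖(∫ y in Ω, innerSL ℝ (kerA f 0 x y)) - ∫ y in Ω, innerSL ℝ (kerA f t x y)‖ ≤
      M * ((∫ z, (Metric.ball (0 : E2) 1).indicator (errH t) z) + t * volume.real Ω) := by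
  have hv := hbdd.measure_lt_top (μ := volume)
  have : IsFiniteMeasure (volume.restrict Ω) := ⟨by simpa using hv⟩
  have i0 := (innerSL ℝ).integrable_comp (kerA_int hf hmeas hv hfM le_rfl x)
  have i1 := (innerSL ℝ).integrable_comp (kerA_int hf hmeas hv hfM ht.le x)
  have hI := (errH_ball_integrable ht.le).comp_sub_left x
  rw [← integral_sub i0 i1]
  have hb : Integrable (fun y => M * ((Metric.ball (0 : E2) 1).indicator (errH t) (x - y) + t))
      (volume.restrict Ω) :=
    (hI.integrableOn.add (integrable_const t)).const_mul M
  refine (norm_integral_le_of_norm_le hb ?_).trans ?_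
  · filter_upwards [ae_restrict_mem hmeas] with y hy
    rw [← map_sub, innerSL_apply_norm]
    exact (norm_kerA_sub ht (hfM y hy) x).trans (by gcongr; exact errH_le ht.le _)
  · rw [integral_const_mul, integral_add hI.integrableOn (integrable_const t)]
    gcongr
    · rw [← integral_sub_left_eq_self _ volume x]
      exact setIntegral_le_integral hI (Eventually.of_forall fun y =>
        indicator_nonneg (fun z _ => errH_nonneg ht.le z) _)
    · simp [mul_comm]

lemma main (hf : Measurable f) (hmeas : MeasurableSet Ω)
    (hbdd : Bornology.IsBounded Ω) (hM : 0 ≤ M) (hfM : ∀ y ∈ Ω, |f y| ≤ M) :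
    Continuous (fun x => ∫ y in Ω, innerSL ℝ (kerA f 0 x y)) ∧
    ∀ x, HasFDerivAt (fun x => ∫ y in Ω, kerL f 0 x y) (∫ y in Ω, innerSL ℝ (kerA f 0 x y)) x := by
  set t : ℕ → ℝ := fun n => 1 / ((n : ℝ) + 1) with htdef
  have ht : ∀ n, 0 < t n := fun n => by positivity
  have ht1 : ∀ n, t n ≤ 1 := fun n => by
    simp only [htdef]
    rw [div_le_one (by positivity)]
    have : (0 : ℝ) ≤ n := by positivity
    linarith
  have htl : Tendsto t atTop (𝓝 0) := tendsto_one_div_add_atTop_nhds_zero_nat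
  have hU : TendstoUniformly (fun n x => ∫ y in Ω, innerSL ℝ (kerA f (t n) x y))
      (fun x => ∫ y in Ω, innerSL ℝ (kerA f 0 x y)) atTop := by
    rw [Metric.tendstoUniformly_iff]
    intro ε hε
    have h0 : Tendsto (fun n => M * ((∫ z, (Metric.ball (0 : E2) 1).indicator (errH (t n)) z)
        + t n * volume.real Ω)) atTop (𝓝 0) := by
      simpa using ((errH_tendsto ht htl).add (htl.mul_const (volume.real Ω))).const_mul M
    filter_upwards [h0.eventually (gt_mem_nhds hε)] with n hn x
    rw [dist_eq_norm]
    exact (grad_diff hf hmeas hbdd hM hfM (ht n) x).trans_lt hn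
  refine ⟨hU.continuous (Eventually.of_forall fun n =>
    reg_continuous hf hmeas hbdd hfM (ht n)).frequently, fun x => ?_⟩
  exact hasFDerivAt_of_tendstoUniformly hU
    (fun n x => reg_hasFDerivAt hf hmeas hbdd hfM (ht n) (ht1 n) x)
    (fun x => kerL_tendsto hf hmeas hbdd hfM ht ht1 htl x) x

end VolPot



/-- For a bounded measurable `Ω ⊆ ℝ²` and a bounded measurable
density `f` on `Ω`, the volume potential `V f(x) = ∫_Ω (1/(2π)) log ‖x - y‖ f(y) dy`
is continuously differentiable on `ℝ²`, and its gradient is obtained by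
differentiation under the integral sign:
`∇Vf(x) = ∫_Ω (x - y)/(2π ‖x - y‖²) f(y) dy` for every `x`. -/
theorem volume_potential_C1_and_gradient
    (Ω : Set (EuclideanSpace ℝ (Fin 2)))
    (hmeas : MeasurableSet Ω) (hbdd : Bornology.IsBounded Ω)
    (f : EuclideanSpace ℝ (Fin 2) → ℝ) (hf : Measurable f)
    (M : ℝ) (hfM : ∀ y ∈ Ω, |f y| ≤ M) :
    ContDiff ℝ 1 (fun x => ∫ y in Ω, (1 / (2 * π)) * Real.log ‖x - y‖ * f y) ∧
    ∀ x, gradient (fun x => ∫ y in Ω, (1 / (2 * π)) * Real.log ‖x - y‖ * f y) x =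
      ∫ y in Ω, f y • ((1 / (2 * π * ‖x - y‖ ^ 2)) • (x - y)) := by
  have hM' : ∀ y ∈ Ω, |f y| ≤ |M| := fun y hy => (hfM y hy).trans (le_abs_self M)
  obtain ⟨hc, hd⟩ := VolPot.main hf hmeas hbdd (abs_nonneg M) hM'
  have e : (fun x => ∫ y in Ω, (1 / (2 * π)) * Real.log ‖x - y‖ * f y) =
      fun x => ∫ y in Ω, VolPot.kerL f 0 x y := by
    funext x
    congr 1
    funext y
    unfold VolPot.kerL
    rw [add_zero, Real.log_pow]
    push_cast
    field_simp
    ring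
  rw [e]
  refine ⟨contDiff_one_iff_hasFDerivAt.2 ⟨_, hc, hd⟩, fun x => ?_⟩
  refine HasGradientAt.gradient ?_
  rw [hasGradientAt_iff_hasFDerivAt]
  convert! hd x using 1
  have hI := VolPot.kerA_int hf hmeas hbdd.measure_lt_top hM' le_rfl x
  rw [(innerSL ℝ).integral_comp_comm hI]
  simp only [VolPot.kerA, add_zero]
  rfl
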